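/- For every θ ∈ (0,1) and every positive integer N there exists a temperature τ̃ > 0 such that the mean squared error of the N-sample Smoothed-Autodiff estimator with temperature τ̃ is strictly less than 4, i.e., (∫₀¹ ∂_θ h_{τ̃}(u,θ) du + 2)² + (1/N)·Var_{U~Uniform[0,1]}(∂_θ h_{τ̃}(U,θ)) < 4. -/

import Mathlib

open Real Filter MeasureTheory

/-- The smoothed reparameterization `h_τ(u, θ)`. -/
noncomputable def hSm (τ u θ : ℝ) : ℝ :=
  (Real.exp ((u - θ) / τ) - 1) / (Real.exp ((u - θ) / τ) + 1)

/-- The θ-partial derivative `∂_θ h_τ(u, θ)`. -/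
noncomputable def dhSm (τ u θ : ℝ) : ℝ :=
  -(2 / τ) * Real.exp ((u - θ) / τ) / (Real.exp ((u - θ) / τ) + 1) ^ 2

/-- Mean of `∂_θ h_τ(U, θ)` for `U ~ Uniform[0,1]`. -/
noncomputable def meanDh (τ θ : ℝ) : ℝ := ∫ u in (0:ℝ)..1, dhSm τ u θ

/-- Variance of `∂_θ h_τ(U, θ)` for `U ~ Uniform[0,1]`. -/
noncomputable def varDh (τ θ : ℝ) : ℝ :=
  (∫ u in (0:ℝ)..1, (dhSm τ u θ) ^ 2) - (meanDh τ θ) ^ 2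

/-- For every `θ ∈ (0,1)` and every positive `N` there is a temperature `τ̃ > 0` such that the
MSE of the `N`-sample Smoothed-Autodiff estimator with temperature `τ̃` is strictly
less than `4`. -/
theorem smoothed_autodiff_mse_lt_four
    (θ : ℝ) (hθ : θ ∈ Set.Ioo (0:ℝ) 1) (N : ℕ) (hN : 0 < N) :
    ∃ τ : ℝ, 0 < τ ∧
      (meanDh τ θ + 2) ^ 2 + (1 / (N : ℝ)) * varDh τ θ < 4 := by
  refine ⟨1, one_pos, ?_⟩
  have hc : Continuous (fun u => dhSm 1 u θ) := by
    unfold dhSm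
    refine Continuous.div (by fun_prop) (by fun_prop) ?_
    intro u
    positivity
  have hneg : ∀ u, dhSm 1 u θ < 0 := by
    intro u
    unfold dhSm
    have h := Real.exp_pos ((u - θ) / 1)
    apply div_neg_of_neg_of_pos
    · nlinarith
    · positivity
  have hlow : ∀ u, -(1 / 2) ≤ dhSm 1 u θ := by
    intro u
    unfold dhSm
    have h := Real.exp_pos ((u - θ) / 1)
    rw [le_div_iff₀ (by positivity)]
    nlinarith [sq_nonneg (Real.exp ((u - θ) / 1) - 1)]
  have hM : 0 < ∫ u in (0:ℝ)..1, -dhSm 1 u θ :=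
    intervalIntegral.intervalIntegral_pos_of_pos (hc.neg.intervalIntegrable _ _)
      (fun u => neg_pos.2 (hneg u)) one_pos
  rw [intervalIntegral.integral_neg] at hM
  have hL : ∫ u in (0:ℝ)..1, (-(1 / 2) : ℝ) ≤ ∫ u in (0:ℝ)..1, dhSm 1 u θ :=
    intervalIntegral.integral_mono_on zero_le_one (by simp)
      (hc.intervalIntegrable _ _) (fun u _ => hlow u)
  have hS : ∫ u in (0:ℝ)..1, (dhSm 1 u θ) ^ 2 ≤ ∫ u in (0:ℝ)..1, (-(1 / 2) : ℝ) * dhSm 1 u θ :=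
    intervalIntegral.integral_mono_on zero_le_one ((hc.pow 2).intervalIntegrable _ _)
      ((hc.const_mul _).intervalIntegrable _ _)
      (fun u _ => by nlinarith [hlow u, hneg u])
  rw [intervalIntegral.integral_const_mul] at hS
  rw [intervalIntegral.integral_const] at hL
  have hS0 : 0 ≤ ∫ u in (0:ℝ)..1, (dhSm 1 u θ) ^ 2 :=
    intervalIntegral.integral_nonneg zero_le_one (fun u _ => sq_nonneg _)
  have hN1 : (1 : ℝ) ≤ N := by exact_mod_cast hN
  have hN2 : 1 / (N : ℝ) ≤ 1 := by
    rw [div_le_one (by linarith)]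
    exact hN1
  have hN0 : 0 ≤ 1 / (N : ℝ) := by positivity
  unfold varDh meanDh
  generalize (∫ u in (0:ℝ)..1, (dhSm 1 u θ) ^ 2) = S at *
  generalize (∫ u in (0:ℝ)..1, dhSm 1 u θ) = m at *
  generalize 1 / (N : ℝ) = c at *
  norm_num at hL
  have h1 : c * (S - m ^ 2) ≤ S := by nlinarith [mul_nonneg hN0 (sq_nonneg m)]
  nlinarith
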